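/- arXiv:1912.10324 — 2 statements merged into one kernel-verified Lean document; each statement's English description precedes it below -/
import Mathlib

section
/- Let n, k, r be integers with r ≥ 2 and 1 ≤ k ≤ n. If 𝒜 ⊆ 𝒮_{n,k,r} is an intersecting family, then |𝒜| ≤ r^(k−1) · C(n−1, k−1). -/
open Finset

/-- The family of `r`-signed `k`-sets on `[n] = {1, …, n}`: finsets of pairs `(x, a)`
with `x ∈ [n]`, `a ∈ [r]`, having `k` elements with pairwise distinct first coordinates. -/
def signedSets (n k r : ℕ) : Finset (Finset (ℕ × ℕ)) :=
  ((Finset.Icc 1 n ×ˢ Finset.Icc 1 r).powerset).filter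
    (fun A => A.card = k ∧ (A.image Prod.fst).card = k)

open scoped Pointwise

/-- Katona's averaging argument: if a finite group acts transitively on `S`, and every translate
of the family `I` of members of `S` meets `𝒜` at most `k` times, then the density of `𝒜` in `S`
is at most `k` divided by the size of the index set. -/
theorem card_mul_card_le_of_translates {G X ι : Type*} [Group G] [Fintype G] [MulAction G X]
    [DecidableEq X] (S 𝒜 : Finset X) (T : Finset ι) (I : ι → X) (k : ℕ)
    (hI : ∀ g : G, ∀ i ∈ T, g • I i ∈ S) (htrans : ∀ A ∈ S, ∀ B ∈ S, ∃ g : G, g • A = B)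
    (h𝒜 : 𝒜 ⊆ S) (hk : ∀ g : G, #{i ∈ T | g • I i ∈ 𝒜} ≤ k) :
    #𝒜 * #T ≤ k * #S := by
  obtain rfl | ⟨A₀, hA₀⟩ := S.eq_empty_or_nonempty
  · simp [subset_empty.1 h𝒜]
  obtain hT | hT := T.eq_empty_or_nonempty
  · simp [hT]
  let P : Finset (G × ι) := univ ×ˢ T
  let M : X → ℕ := fun A => #{p ∈ P | p.1 • I p.2 = A}
  have hM : ∀ A ∈ S, M A = M A₀ := by
    intro A hA
    obtain ⟨h, rfl⟩ := htrans A₀ hA₀ A hA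
    symm
    refine card_bij' (fun p _ => (h * p.1, p.2)) (fun p _ => (h⁻¹ * p.1, p.2)) ?_ ?_ ?_ ?_
    · rintro ⟨g, i⟩ hp
      simp only [P, mem_filter, mem_product, mem_univ, true_and] at hp ⊢
      exact ⟨hp.1, by rw [mul_smul, hp.2]⟩
    · rintro ⟨g, i⟩ hp
      simp only [P, mem_filter, mem_product, mem_univ, true_and] at hp ⊢
      exact ⟨hp.1, by rw [mul_smul, hp.2, inv_smul_smul]⟩
    · simp
    · simp
  have hS : Fintype.card G * #T = #S * M A₀ := by
    have h : #P = ∑ A ∈ S, M A := card_eq_sum_card_fiberwise fun p hp =>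
      hI p.1 p.2 (mem_product.1 hp).2
    rw [sum_congr rfl hM, sum_const, smul_eq_mul] at h
    rw [← h, card_product, card_univ]
  have h𝒜M : #𝒜 * M A₀ ≤ Fintype.card G * k := by
    calc #𝒜 * M A₀ = ∑ A ∈ 𝒜, M A := by
          rw [sum_congr rfl fun A hA => hM A (h𝒜 hA), sum_const, smul_eq_mul]
      _ = #{p ∈ P | p.1 • I p.2 ∈ 𝒜} := by
          have hmaps : Set.MapsTo (fun p : G × ι => p.1 • I p.2)
              ({p ∈ P | p.1 • I p.2 ∈ 𝒜} : Finset (G × ι)) 𝒜 := fun p hp => (mem_filter.1 hp).2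
          rw [card_eq_sum_card_fiberwise hmaps]
          refine sum_congr rfl fun A hA => ?_
          rw [filter_filter]
          refine congrArg card (filter_congr fun p _ => ?_)
          constructor
          · rintro rfl
            exact ⟨hA, rfl⟩
          · exact And.right
      _ = ∑ g : G, #{i ∈ T | g • I i ∈ 𝒜} := by
          simp only [card_filter, P, sum_product]
      _ ≤ Fintype.card G * k := by
          rw [← card_univ, ← smul_eq_mul]
          exact sum_le_card_nsmul _ _ _ fun g _ => hk g
  have hpos : 0 < M A₀ := by
    refine Nat.pos_of_ne_zero fun h0 => ?_
    rw [h0, mul_zero] at hS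
    exact (Nat.mul_pos Fintype.card_pos hT.card_pos).ne' hS
  refine Nat.le_of_mul_le_mul_right ?_ hpos
  calc #𝒜 * #T * M A₀ = #𝒜 * M A₀ * #T := by ring
    _ ≤ Fintype.card G * k * #T := Nat.mul_le_mul_right _ h𝒜M
    _ = k * (Fintype.card G * #T) := by ring
    _ = k * #S * M A₀ := by rw [hS]; ring

/-- Katona's circle lemma: at most `k` arcs of length `k` on a cycle of length `N ≥ 2 * k`
can pairwise intersect. Arcs are given by their starting points. -/
theorem card_le_of_pairwise_intersecting_arcs {N k : ℕ} (hN : 2 * k ≤ N) (T : Finset ℕ)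
    (hT : T ⊆ range N)
    (h : ∀ i ∈ T, ∀ j ∈ T, ∃ s < k, ∃ t < k, (i + s) % N = (j + t) % N) : #T ≤ k := by
  have h' : ∀ i ∈ T, ∀ j ∈ T, (i < j + k ∧ j < i + k) ∨ i + N < j + k ∨ j + N < i + k := by
    intro i hi j hj
    obtain ⟨s, hs, t, ht, e⟩ := h i hi j hj
    have hi' := mem_range.1 (hT hi)
    have hj' := mem_range.1 (hT hj)
    have key : ∀ a, a < 2 * N → (a < N ∧ a % N = a) ∨ (N ≤ a ∧ a % N = a - N) := by
      intro a ha
      obtain h | h := lt_or_ge a N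
      · exact Or.inl ⟨h, Nat.mod_eq_of_lt h⟩
      · exact Or.inr ⟨h, by rw [Nat.mod_eq_sub_mod h, Nat.mod_eq_of_lt (by omega)]⟩
    have h1 := key (i + s) (by omega)
    have h2 := key (j + t) (by omega)
    omega
  obtain rfl | hne := T.eq_empty_or_nonempty
  · simp
  let m := T.min' hne
  have hm : m ∈ T := T.min'_mem hne
  have hle : ∀ j ∈ T, m ≤ j := fun j hj => T.min'_le j hj
  have hlt : ∀ j ∈ T, j < N := fun j hj => mem_range.1 (hT hj)
  rw [← card_range k]
  refine card_le_card_of_injOn (fun j => if j - m < k then j - m else j - m + k - N) ?_ ?_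
  · intro j hj
    have h1 := hle j hj
    have h2 := hlt j hj
    have h3 := h' m hm j hj
    simp only [coe_range, Set.mem_Iio]
    split_ifs <;> omega
  · intro i hi j hj e
    have h1 := hle j hj
    have h2 := hlt j hj
    have h3 := h' m hm j hj
    have h4 := hle i hi
    have h5 := hlt i hi
    have h6 := h' m hm i hi
    have h7 := h' i hi j hj
    dsimp only at e
    split_ifs at e <;> omega

/-- The permutations of `α × β` preserving the partition into fibres of the first projection. -/
def fiberPerms (α β : Type*) : Subgroup (Equiv.Perm (α × β)) where
  carrier := {g | ∀ p q, (g p).1 = (g q).1 ↔ p.1 = q.1}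
  one_mem' := fun _ _ => Iff.rfl
  mul_mem' := fun hg hh p q => (hg _ _).trans (hh p q)
  inv_mem' := fun {g} hg p q => by
    simpa using (hg (g⁻¹ p) (g⁻¹ q)).symm

section PartialGraphs

variable {α β : Type*} [Fintype α] [Fintype β] [DecidableEq α] [DecidableEq β]

/-- The `k`-element subsets of `α × β` whose elements have distinct first coordinates. -/
def partialGraphs (α β : Type*) [Fintype α] [Fintype β] [DecidableEq α] [DecidableEq β]
    (k : ℕ) : Finset (Finset (α × β)) :=
  {A | #A = k ∧ #(A.image Prod.fst) = k}

theorem mem_partialGraphs_iff {k : ℕ} {A : Finset (α × β)} :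
    A ∈ partialGraphs α β k ↔ #A = k ∧ Set.InjOn Prod.fst (A : Set (α × β)) := by
  simp only [partialGraphs, mem_filter, mem_univ, true_and]
  constructor
  · rintro ⟨h1, h2⟩
    exact ⟨h1, card_image_iff.1 (h2.trans h1.symm)⟩
  · rintro ⟨h1, h2⟩
    exact ⟨h1, (card_image_of_injOn h2).trans h1⟩

theorem exists_eq_image_of_mem_partialGraphs [Nonempty β] {k : ℕ} {A : Finset (α × β)}
    (hA : A ∈ partialGraphs α β k) :
    ∃ (s : Finset α) (f : α → β), #s = k ∧ A = s.image fun x => (x, f x) := by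
  have hinj := (mem_partialGraphs_iff.1 hA).2
  have hex : ∀ x, ∃ b, x ∈ A.image Prod.fst → (x, b) ∈ A := by
    intro x
    by_cases hx : x ∈ A.image Prod.fst
    · obtain ⟨⟨y, b⟩, hp, rfl⟩ := mem_image.1 hx
      exact ⟨b, fun _ => hp⟩
    · exact ⟨Classical.arbitrary β, fun h => absurd h hx⟩
  choose f hf using hex
  refine ⟨A.image Prod.fst, f, (mem_filter.1 hA).2.2, ?_⟩
  ext p
  simp only [mem_image]
  constructor
  · intro hp
    refine ⟨p.1, ⟨p, hp, rfl⟩, ?_⟩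
    exact hinj (hf p.1 (mem_image_of_mem _ hp)) hp rfl
  · rintro ⟨x, hx, rfl⟩
    exact hf x (mem_image.2 hx)

theorem smul_mem_partialGraphs {k : ℕ} {A : Finset (α × β)} (g : fiberPerms α β)
    (hA : A ∈ partialGraphs α β k) : g • A ∈ partialGraphs α β k := by
  rw [mem_partialGraphs_iff] at hA ⊢
  refine ⟨by rw [card_smul_finset, hA.1], ?_⟩
  intro p hp q hq e
  obtain ⟨p, hp', rfl⟩ := mem_smul_finset.1 hp
  obtain ⟨q, hq', rfl⟩ := mem_smul_finset.1 hq
  rw [hA.2 hp' hq' ((g.2 p q).1 e)]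

theorem exists_perm_image_eq {s t : Finset α} (h : #s = #t) :
    ∃ σ : Equiv.Perm α, s.image σ = t := by
  let e : {x // x ∈ s} ≃ {x // x ∈ t} := Finset.equivOfCardEq h
  refine ⟨e.extendSubtype, eq_of_subset_of_card_le ?_ ?_⟩
  · intro y hy
    obtain ⟨x, hx, rfl⟩ := mem_image.1 hy
    exact e.extendSubtype_mem x hx
  · rw [card_image_of_injective _ (Equiv.injective _), h]

theorem exists_smul_eq_of_mem_partialGraphs [Nonempty β] {k : ℕ} {A B : Finset (α × β)}
    (hA : A ∈ partialGraphs α β k) (hB : B ∈ partialGraphs α β k) :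
    ∃ g : fiberPerms α β, g • A = B := by
  obtain ⟨s, f, hs, rfl⟩ := exists_eq_image_of_mem_partialGraphs hA
  obtain ⟨t, f', ht, rfl⟩ := exists_eq_image_of_mem_partialGraphs hB
  obtain ⟨σ, rfl⟩ := exists_perm_image_eq (hs.trans ht.symm)
  let e : Equiv.Perm (α × β) := Equiv.prodShear σ fun x => Equiv.swap (f x) (f' (σ x))
  refine ⟨⟨e, fun p q => σ.injective.eq_iff⟩, ?_⟩
  rw [smul_finset_def, image_image, image_image]
  refine image_congr fun x _ => ?_
  change e (x, f x) = (σ x, f' (σ x))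
  simp [e]

theorem card_partialGraphs [Nonempty β] (k : ℕ) :
    #(partialGraphs α β k) = (Fintype.card α).choose k * Fintype.card β ^ k := by
  have hsig : #((powersetCard k (univ : Finset α)).sigma
      fun s => (univ : Finset (s → β))) = #(partialGraphs α β k) := by
    refine card_bij (fun p _ => univ.image fun x : p.1 => (x.1, p.2 x)) ?_ ?_ ?_
    · rintro ⟨s, f⟩ hp
      have hs : #s = k := (mem_powersetCard.1 (mem_sigma.1 hp).1).2
      rw [mem_partialGraphs_iff]
      constructor
      · rw [card_image_of_injective, card_univ, Fintype.card_coe, hs]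
        intro x y e
        exact Subtype.ext (congrArg Prod.fst e)
      · intro p hp q hq e
        obtain ⟨x, -, rfl⟩ := mem_image.1 hp
        obtain ⟨y, -, rfl⟩ := mem_image.1 hq
        obtain rfl : x = y := Subtype.ext e
        rfl
    · rintro ⟨s, f⟩ _ ⟨t, f'⟩ _ e
      have hst : s = t := by
        have := congrArg (image Prod.fst) e
        simpa [image_image, Function.comp_def] using this
      subst hst
      congr 1
      funext x
      have hx : (x.1, f x) ∈ univ.image fun x : s => (x.1, f' x) :=
        e ▸ mem_image_of_mem _ (mem_univ x)
      obtain ⟨y, -, hy⟩ := mem_image.1 hx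
      obtain rfl : y = x := Subtype.ext (congrArg Prod.fst hy)
      exact (congrArg Prod.snd hy).symm
    · intro A hA
      obtain ⟨s, f, hs, rfl⟩ := exists_eq_image_of_mem_partialGraphs hA
      refine ⟨⟨s, fun x => f x⟩, by simp [hs], ?_⟩
      ext p
      simp
  rw [← hsig, card_sigma, sum_congr rfl (g := fun _ => Fintype.card β ^ k), sum_const,
    card_powersetCard, card_univ, smul_eq_mul]
  intro s hs
  rw [card_univ, Fintype.card_fun, Fintype.card_coe, (mem_powersetCard.1 hs).2]

end PartialGraphs

/-- A cyclic enumeration of `Fin n × Fin r` with period `n * r`, in which any `n` consecutive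
elements have distinct first coordinates. -/
def cyclicEnum (n r : ℕ) [NeZero n] [NeZero r] (m : ℕ) : Fin n × Fin r :=
  (Fin.ofNat n m, Fin.ofNat r (m / n))

theorem mod_eq_of_cyclicEnum_eq {n r : ℕ} [NeZero n] [NeZero r] {a b : ℕ}
    (h : cyclicEnum n r a = cyclicEnum n r b) : a % (n * r) = b % (n * r) := by
  have h1 : a % n = b % n := congrArg (fun p => p.1.val) h
  have h2 : a / n % r = b / n % r := congrArg (fun p => p.2.val) h
  rw [Nat.mod_mul, Nat.mod_mul, h1, h2]

theorem image_cyclicEnum_mem_partialGraphs {n r k : ℕ} [NeZero n] [NeZero r] (hk : k ≤ n)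
    (i : ℕ) :
    (range k).image (fun t => cyclicEnum n r (i + t)) ∈ partialGraphs (Fin n) (Fin r) k := by
  have hinj : ∀ s < k, ∀ t < k,
      (cyclicEnum n r (i + s)).1 = (cyclicEnum n r (i + t)).1 → s = t := by
    intro s hs t ht e
    have h1 : (i + s) % n = (i + t) % n := congrArg Fin.val e
    have h2 : s % n = t % n := Nat.ModEq.add_left_cancel' i h1
    rwa [Nat.mod_eq_of_lt (by omega), Nat.mod_eq_of_lt (by omega)] at h2
  rw [mem_partialGraphs_iff]
  constructor
  · rw [card_image_of_injOn, card_range]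
    intro s hs t ht e
    exact hinj s (by simpa using hs) t (by simpa using ht) (congrArg Prod.fst e)
  · intro p hp q hq e
    obtain ⟨s, hs, rfl⟩ := mem_image.1 hp
    obtain ⟨t, ht, rfl⟩ := mem_image.1 hq
    rw [hinj s (mem_range.1 hs) t (mem_range.1 ht) e]

theorem card_mul_le_of_intersecting_partialGraphs {n k r : ℕ} (hr : 2 ≤ r) (hk : 1 ≤ k)
    (hkn : k ≤ n) (𝒜 : Finset (Finset (Fin n × Fin r)))
    (h𝒜 : 𝒜 ⊆ partialGraphs (Fin n) (Fin r) k)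
    (hint : ∀ A ∈ 𝒜, ∀ B ∈ 𝒜, (A ∩ B).Nonempty) :
    #𝒜 * (n * r) ≤ k * (n.choose k * r ^ k) := by
  classical
  have : NeZero n := ⟨by omega⟩
  have : NeZero r := ⟨by omega⟩
  have hmain := card_mul_card_le_of_translates (G := fiberPerms (Fin n) (Fin r))
    (partialGraphs (Fin n) (Fin r) k) 𝒜 (range (n * r))
    (fun i => (range k).image fun t => cyclicEnum n r (i + t)) k
    (fun g i _ => smul_mem_partialGraphs g (image_cyclicEnum_mem_partialGraphs hkn i))
    (fun A hA B hB => exists_smul_eq_of_mem_partialGraphs hA hB) h𝒜 ?_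
  · simpa [card_partialGraphs] using hmain
  · intro g
    refine card_le_of_pairwise_intersecting_arcs (N := n * r) (by nlinarith) _
      (filter_subset _ _) ?_
    intro i hi j hj
    have hne := hint _ (mem_filter.1 hi).2 _ (mem_filter.1 hj).2
    rw [← smul_finset_inter, smul_finset_nonempty] at hne
    obtain ⟨p, hp⟩ := hne
    obtain ⟨hpi, hpj⟩ := mem_inter.1 hp
    obtain ⟨s, hs, rfl⟩ := mem_image.1 hpi
    obtain ⟨t, ht, e⟩ := mem_image.1 hpj
    exact ⟨s, mem_range.1 hs, t, mem_range.1 ht, mod_eq_of_cyclicEnum_eq e.symm⟩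

/-- The successor embedding of `Fin n` onto `{1, …, n}`. -/
def finSuccEmb (n : ℕ) : Fin n ↪ ℕ :=
  ⟨fun x => x + 1, fun _ _ h => Fin.ext (Nat.succ_injective h)⟩

theorem card_mul_le_of_intersecting_signedSets {n k r : ℕ} (hr : 2 ≤ r) (hk : 1 ≤ k)
    (hkn : k ≤ n) (𝒜 : Finset (Finset (ℕ × ℕ))) (h𝒜 : 𝒜 ⊆ signedSets n k r)
    (hint : ∀ A ∈ 𝒜, ∀ B ∈ 𝒜, (A ∩ B).Nonempty) :
    #𝒜 * (n * r) ≤ k * (n.choose k * r ^ k) := by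
  let φ : Fin n × Fin r ↪ ℕ × ℕ := (finSuccEmb n).prodMap (finSuccEmb r)
  let ℬ : Finset (Finset (Fin n × Fin r)) := {B | B.map φ ∈ 𝒜}
  have hmap : 𝒜 = ℬ.map (mapEmbedding φ).toEmbedding := by
    ext A
    simp only [mem_map, ℬ, mem_filter, mem_univ, true_and, RelEmbedding.coe_toEmbedding,
      mapEmbedding_apply]
    constructor
    · intro hA
      have hsub : A ⊆ univ.map φ := by
        intro p hp
        have h := mem_powerset.1 (mem_filter.1 (h𝒜 hA)).1 hp
        simp only [mem_product, mem_Icc] at h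
        refine mem_map.2 ⟨(⟨p.1 - 1, by omega⟩, ⟨p.2 - 1, by omega⟩), mem_univ _, ?_⟩
        refine Prod.ext ?_ ?_
        · change p.1 - 1 + 1 = p.1
          omega
        · change p.2 - 1 + 1 = p.2
          omega
      obtain ⟨B, -, rfl⟩ := subset_map_iff.1 hsub
      exact ⟨B, hA, rfl⟩
    · rintro ⟨B, hB, rfl⟩
      exact hB
  have hcard : #𝒜 = #ℬ := by
    conv_lhs => rw [hmap]
    exact card_map _
  rw [hcard]
  refine card_mul_le_of_intersecting_partialGraphs hr hk hkn ℬ ?_ ?_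
  · intro B hB
    have h := (mem_filter.1 (h𝒜 (mem_filter.1 hB).2)).2
    refine mem_filter.2 ⟨mem_univ _, (card_map φ).symm.trans h.1, ?_⟩
    have himage : (B.map φ).image Prod.fst = (B.image Prod.fst).map (finSuccEmb n) := by
      rw [map_eq_image, map_eq_image, image_image, image_image]
      rfl
    rw [← card_map (finSuccEmb n), ← himage, h.2]
  · intro A hA B hB
    have h := hint _ (mem_filter.1 hA).2 _ (mem_filter.1 hB).2
    rwa [← map_inter, map_nonempty] at h

theorem signed_EKR (n k r : ℕ) (hr : 2 ≤ r) (hk : 1 ≤ k) (hkn : k ≤ n)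
    (𝒜 : Finset (Finset (ℕ × ℕ))) (h𝒜 : 𝒜 ⊆ signedSets n k r)
    (hint : ∀ A ∈ 𝒜, ∀ B ∈ 𝒜, (A ∩ B).Nonempty) :
    𝒜.card ≤ r ^ (k - 1) * Nat.choose (n - 1) (k - 1) := by
  have h := card_mul_le_of_intersecting_signedSets hr hk hkn 𝒜 h𝒜 hint
  obtain ⟨m, rfl⟩ : ∃ m, n = m + 1 := ⟨n - 1, by omega⟩
  obtain ⟨l, rfl⟩ : ∃ l, k = l + 1 := ⟨k - 1, by omega⟩
  have hc := Nat.add_one_mul_choose_eq m l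
  simp only [Nat.add_sub_cancel]
  refine Nat.le_of_mul_le_mul_right (h.trans_eq ?_) (show 0 < (m + 1) * r by positivity)
  calc (l + 1) * ((m + 1).choose (l + 1) * r ^ (l + 1))
      = (m + 1).choose (l + 1) * (l + 1) * r ^ (l + 1) := by ring
    _ = r ^ l * m.choose l * ((m + 1) * r) := by rw [← hc]; ring
end

section
/- (Hilton–Milner Theorem) Let n, k be integers with n ≥ 2k ≥ 4. If ℱ is an intersecting family of k-element subsets of [n] that is non-trivial (i.e., there is no element belonging to every member of ℱ), then |ℱ| ≤ C(n−1, k−1) − C(n−k−1, k−1) + 1. -/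
open Finset

open scoped FinsetFamily

namespace HiltonMilner

variable {α : Type*} [DecidableEq α]

/-- Every member of the first family meets every member of the second. -/
def CrossIntersecting (P Q : Finset (Finset α)) : Prop :=
  ∀ A ∈ P, ∀ B ∈ Q, (A ∩ B).Nonempty

/-- Replacing `x` by another element of `V` does not lead out of the family. -/
def IsStable (x : α) (V : Finset α) (P : Finset (Finset α)) : Prop :=
  ∀ i ∈ V, i ≠ x → ∀ A ∈ P, x ∈ A → i ∉ A → insert i (A.erase x) ∈ P

lemma compress_singleton_of_mem {i x : α} {A : Finset α} (hi : i ∉ A) (hx : x ∈ A) :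
    UV.compress {i} {x} A = insert i A \ {x} := by
  rw [UV.compress_of_disjoint_of_le (by simpa using hi) (by simpa using hx)]
  ext a; simp

lemma compress_singleton_of_not {i x : α} {A : Finset α} (h : ¬ (i ∉ A ∧ x ∈ A)) :
    UV.compress {i} {x} A = A := by
  rw [UV.compress, if_neg]
  simpa using h

lemma mem_compression_singleton {i x : α} {P : Finset (Finset α)} {A : Finset α}
    (hA : A ∈ 𝓒 {i} {x} P) :
    (A ∈ P ∧ (i ∉ A → x ∈ A → insert i A \ {x} ∈ P)) ∨
      (A ∉ P ∧ ∃ B ∈ P, i ∉ B ∧ x ∈ B ∧ A = insert i B \ {x}) := by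
  rcases UV.mem_compression.1 hA with ⟨h, h'⟩ | ⟨h, B, hB, rfl⟩
  · refine Or.inl ⟨h, fun hi hx ↦ ?_⟩
    rwa [compress_singleton_of_mem hi hx] at h'
  · refine Or.inr ⟨h, B, hB, ?_⟩
    by_cases hc : i ∉ B ∧ x ∈ B
    · exact ⟨hc.1, hc.2, compress_singleton_of_mem hc.1 hc.2⟩
    · rw [compress_singleton_of_not hc] at h
      exact absurd hB h

lemma CrossIntersecting.compression {P Q : Finset (Finset α)} (h : CrossIntersecting P Q)
    {i x : α} (hix : i ≠ x) : CrossIntersecting (𝓒 {i} {x} P) (𝓒 {i} {x} Q) := by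
  intro A hA B hB
  rcases mem_compression_singleton hA with ⟨hA, hA'⟩ | ⟨-, A', hA', hiA, hxA, rfl⟩ <;>
    rcases mem_compression_singleton hB with ⟨hB, hB'⟩ | ⟨-, B', hB', hiB, hxB, rfl⟩
  · exact h A hA B hB
  · by_cases hi : i ∈ A
    · exact ⟨i, by simp [hi, hix]⟩
    · by_cases hx : x ∈ A
      · obtain ⟨a, ha⟩ := h _ (hA' hi hx) B' hB'
        exact ⟨a, by grind⟩
      · obtain ⟨a, ha⟩ := h A hA B' hB'
        exact ⟨a, by grind⟩
  · by_cases hi : i ∈ B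
    · exact ⟨i, by simp [hi, hix]⟩
    · by_cases hx : x ∈ B
      · obtain ⟨a, ha⟩ := h A' hA' _ (hB' hi hx)
        exact ⟨a, by grind⟩
      · obtain ⟨a, ha⟩ := h A' hA' B hB
        exact ⟨a, by grind⟩
  · exact ⟨i, by simp [hix]⟩

lemma compression_subset_powersetCard {P : Finset (Finset α)} {V : Finset α} {s : ℕ}
    (hP : P ⊆ V.powersetCard s) {i x : α} (hi : i ∈ V) :
    𝓒 {i} {x} P ⊆ V.powersetCard s := by
  intro A hA
  rcases mem_compression_singleton hA with ⟨hA, -⟩ | ⟨-, B, hB, hiB, hxB, rfl⟩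
  · exact hP hA
  · have hB' := mem_powersetCard.1 (hP hB)
    rw [mem_powersetCard]
    refine ⟨sdiff_subset.trans (insert_subset hi hB'.1), ?_⟩
    rw [card_sdiff_of_subset (by simp [hxB]), card_insert_of_notMem hiB, hB'.2]
    simp

lemma card_filter_compression_le (P : Finset (Finset α)) {i x : α} :
    #{A ∈ 𝓒 {i} {x} P | x ∈ A} ≤ #{A ∈ P | x ∈ A} := by
  refine card_le_card fun A hA ↦ ?_
  rw [mem_filter] at hA ⊢
  rcases mem_compression_singleton hA.1 with ⟨h, -⟩ | ⟨-, B, hB, -, -, rfl⟩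
  · exact ⟨h, hA.2⟩
  · simp at hA

lemma card_filter_compression_lt {P : Finset (Finset α)} {i x : α} {A : Finset α} (hix : i ≠ x)
    (hA : A ∈ P) (hx : x ∈ A) (hi : i ∉ A) (h : insert i (A.erase x) ∉ P) :
    #{A ∈ 𝓒 {i} {x} P | x ∈ A} < #{A ∈ P | x ∈ A} := by
  refine card_lt_card ⟨fun B hB ↦ ?_, fun hsub ↦ ?_⟩
  · rw [mem_filter] at hB ⊢
    rcases mem_compression_singleton hB.1 with ⟨h, -⟩ | ⟨-, C, hC, -, -, rfl⟩
    · exact ⟨h, hB.2⟩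
    · simp at hB
  · have hA' := mem_filter.1 (hsub (mem_filter.2 ⟨hA, hx⟩))
    rcases mem_compression_singleton hA'.1 with ⟨-, h'⟩ | ⟨h', -⟩
    · refine h ?_
      convert h' hi hx using 1
      ext a
      simp only [mem_insert, mem_erase, mem_sdiff, mem_singleton]
      grind
    · exact h' hA

lemma nonMemberSubfamily_subset_powersetCard {P : Finset (Finset α)} {V : Finset α} {s : ℕ} (x : α)
    (hP : P ⊆ V.powersetCard s) : P.nonMemberSubfamily x ⊆ (V.erase x).powersetCard s := by
  intro A hA
  rw [mem_nonMemberSubfamily] at hA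
  have := mem_powersetCard.1 (hP hA.1)
  exact mem_powersetCard.2 ⟨subset_erase.2 ⟨this.1, hA.2⟩, this.2⟩

lemma memberSubfamily_subset_powersetCard {P : Finset (Finset α)} {V : Finset α} {s : ℕ} (x : α)
    (hP : P ⊆ V.powersetCard (s + 1)) : P.memberSubfamily x ⊆ (V.erase x).powersetCard s := by
  intro A hA
  rw [mem_memberSubfamily] at hA
  have := mem_powersetCard.1 (hP hA.1)
  rw [card_insert_of_notMem hA.2] at this
  refine mem_powersetCard.2 ⟨subset_erase.2 ⟨(subset_insert _ _).trans this.1, hA.2⟩, by omega⟩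

lemma CrossIntersecting.nonMemberSubfamily {P Q : Finset (Finset α)} (h : CrossIntersecting P Q)
    (x : α) : CrossIntersecting (P.nonMemberSubfamily x) (Q.nonMemberSubfamily x) :=
  fun A hA B hB ↦ h A (mem_nonMemberSubfamily.1 hA).1 B (mem_nonMemberSubfamily.1 hB).1

lemma CrossIntersecting.symm {P Q : Finset (Finset α)} (h : CrossIntersecting P Q) :
    CrossIntersecting Q P :=
  fun A hA B hB ↦ by rw [inter_comm]; exact h B hB A hA

lemma CrossIntersecting.memberSubfamily {P Q : Finset (Finset α)} (h : CrossIntersecting P Q)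
    {V : Finset α} {s : ℕ} {x : α} (hP : P ⊆ V.powersetCard s) (hQ : Q ⊆ V.powersetCard s)
    (hV : 2 * s < #V) (hs : IsStable x V P) :
    CrossIntersecting (P.memberSubfamily x) (Q.memberSubfamily x) := by
  intro A hA B hB
  rw [mem_memberSubfamily] at hA hB
  have hA' := mem_powersetCard.1 (hP hA.1)
  have hB' := mem_powersetCard.1 (hQ hB.1)
  obtain ⟨i, hiV, hi⟩ : ∃ i ∈ V, i ∉ insert x A ∪ insert x B := by
    apply exists_mem_notMem_of_card_lt_card
    have := card_union_le (insert x A) (insert x B)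
    omega
  have hix : i ≠ x := by grind
  have hmem := hs i hiV hix _ hA.1 (mem_insert_self _ _) (by grind)
  rw [erase_insert hA.2] at hmem
  obtain ⟨a, ha⟩ := h _ hmem _ hB.1
  exact ⟨a, by grind⟩

lemma IsStable.exists_nonMember {P : Finset (Finset α)} {V : Finset α} {s : ℕ} {x y : α}
    (hs : IsStable x V P) (hP : P ⊆ V.powersetCard s) (hV : s + 1 < #V)
    {A : Finset α} (hA : A ∈ P) (hy : y ∉ A) : ∃ B ∈ P.nonMemberSubfamily x, y ∉ B := by
  by_cases hx : x ∈ A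
  · have hA' := mem_powersetCard.1 (hP hA)
    obtain ⟨i, hiV, hi⟩ : ∃ i ∈ V, i ∉ insert y A := by
      apply exists_mem_notMem_of_card_lt_card
      have := card_insert_le y A
      omega
    have hix : i ≠ x := by grind
    refine ⟨_, mem_nonMemberSubfamily.2 ⟨hs i hiV hix A hA hx (by grind), ?_⟩, ?_⟩ <;> grind
  · exact ⟨A, mem_nonMemberSubfamily.2 ⟨hA, hx⟩, hy⟩

lemma IsStable.nonMemberSubfamily_nonempty {P : Finset (Finset α)} {V : Finset α} {s : ℕ} {x : α}
    (hs : IsStable x V P) (hP : P ⊆ V.powersetCard s) (hV : s < #V) (hne : P.Nonempty) :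
    (P.nonMemberSubfamily x).Nonempty := by
  obtain ⟨A, hA⟩ := hne
  by_cases hx : x ∈ A
  · have hA' := mem_powersetCard.1 (hP hA)
    obtain ⟨i, hiV, hi⟩ : ∃ i ∈ V, i ∉ A := exists_mem_notMem_of_card_lt_card (by omega)
    have hix : i ≠ x := by grind
    exact ⟨_, mem_nonMemberSubfamily.2 ⟨hs i hiV hix A hA hx hi, by grind⟩⟩
  · exact ⟨A, mem_nonMemberSubfamily.2 ⟨hA, hx⟩⟩

lemma card_add_choose_le_of_meets {P : Finset (Finset α)} {W T : Finset α} {s : ℕ}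
    (hP : P ⊆ W.powersetCard s) (hT : T ⊆ W) (h : ∀ A ∈ P, (A ∩ T).Nonempty) :
    #P + (#W - #T).choose s ≤ (#W).choose s := by
  have hdisj : Disjoint P ((W \ T).powersetCard s) := by
    rw [disjoint_left]
    intro A hA hA'
    obtain ⟨a, ha⟩ := h A hA
    have := (mem_powersetCard.1 hA').1
    grind
  rw [← card_sdiff_of_subset hT, ← card_powersetCard, ← card_powersetCard,
    ← card_union_of_disjoint hdisj]
  exact card_le_card (union_subset hP (powersetCard_mono sdiff_subset))

lemma CrossIntersecting.card_add_card_le_choose {P Q : Finset (Finset α)} {V : Finset α} {s : ℕ}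
    (h : CrossIntersecting P Q) (hP : P ⊆ V.powersetCard s) (hQ : Q ⊆ V.powersetCard s)
    (hV : #V = 2 * s) : #P + #Q ≤ (2 * s).choose s := by
  have hinj : Set.InjOn (fun B ↦ V \ B) (Q : Set (Finset α)) := by
    intro A hA B hB hAB
    have hA' := (mem_powersetCard.1 (hQ hA)).1
    have hB' := (mem_powersetCard.1 (hQ hB)).1
    rw [← Finset.sdiff_sdiff_eq_self hA', ← Finset.sdiff_sdiff_eq_self hB']
    exact congrArg (V \ ·) hAB
  have hdisj : Disjoint P (Q.image (V \ ·)) := by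
    rw [disjoint_right]
    intro A hA hAP
    obtain ⟨B, hB, rfl⟩ := mem_image.1 hA
    obtain ⟨a, ha⟩ := h _ hAP B hB
    grind
  rw [← card_image_of_injOn hinj, ← card_union_of_disjoint hdisj, ← hV, ← card_powersetCard]
  refine card_le_card (union_subset hP ?_)
  intro A hA
  obtain ⟨B, hB, rfl⟩ := mem_image.1 hA
  have hB' := mem_powersetCard.1 (hQ hB)
  rw [mem_powersetCard, card_sdiff_of_subset hB'.1]
  exact ⟨sdiff_subset, by omega⟩

/-- Repeated compression produces stable cross-intersecting families of the same sizes. -/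
lemma CrossIntersecting.exists_stable {P Q : Finset (Finset α)} {V : Finset α} {s : ℕ} (x : α)
    (h : CrossIntersecting P Q) (hP : P ⊆ V.powersetCard s) (hQ : Q ⊆ V.powersetCard s) :
    ∃ P' Q' : Finset (Finset α), CrossIntersecting P' Q' ∧ P' ⊆ V.powersetCard s ∧
      Q' ⊆ V.powersetCard s ∧ IsStable x V P' ∧ IsStable x V Q' ∧ #P' = #P ∧ #Q' = #Q := by
  by_cases hst : IsStable x V P ∧ IsStable x V Q
  · exact ⟨P, Q, h, hP, hQ, hst.1, hst.2, rfl, rfl⟩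
  obtain ⟨i, hi, hix, hlt⟩ : ∃ i ∈ V, i ≠ x ∧
      #{A ∈ 𝓒 {i} {x} P | x ∈ A} + #{A ∈ 𝓒 {i} {x} Q | x ∈ A} <
        #{A ∈ P | x ∈ A} + #{A ∈ Q | x ∈ A} := by
    rw [not_and_or] at hst
    unfold IsStable at hst
    push Not at hst
    rcases hst with ⟨i, hi, hix, A, hA, hxA, hiA, hn⟩ | ⟨i, hi, hix, A, hA, hxA, hiA, hn⟩
    · exact ⟨i, hi, hix, add_lt_add_of_lt_of_le (card_filter_compression_lt hix hA hxA hiA hn)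
        (card_filter_compression_le Q)⟩
    · exact ⟨i, hi, hix, add_lt_add_of_le_of_lt (card_filter_compression_le P)
        (card_filter_compression_lt hix hA hxA hiA hn)⟩
  obtain ⟨P', Q', h1, h2, h3, h4, h5, h6, h7⟩ := (h.compression hix).exists_stable x
    (compression_subset_powersetCard hP hi) (compression_subset_powersetCard hQ hi)
  rw [UV.card_compression] at h6 h7
  exact ⟨P', Q', h1, h2, h3, h4, h5, h6, h7⟩
termination_by #{A ∈ P | x ∈ A} + #{A ∈ Q | x ∈ A}

/-- The sum of the sizes of two nonempty cross-intersecting families of `s`-sets. -/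
lemma CrossIntersecting.card_add_card_add_choose_le (s d : ℕ) {P Q : Finset (Finset α)}
    {V : Finset α} (h : CrossIntersecting P Q) (hV : #V = 2 * s + d)
    (hP : P ⊆ V.powersetCard s) (hQ : Q ⊆ V.powersetCard s)
    (hPne : P.Nonempty) (hQne : Q.Nonempty) :
    #P + #Q + (s + d).choose s ≤ (2 * s + d).choose s + 1 := by
  induction s generalizing d P Q V with
  | zero =>
    obtain ⟨A, hA⟩ := hPne
    obtain ⟨B, hB⟩ := hQne
    have := h A hA B hB
    have hA' := mem_powersetCard.1 (hP hA)
    rw [card_eq_zero.1 hA'.2] at this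
    simp at this
  | succ t ihs =>
  induction d generalizing P Q V with
  | zero =>
    have := h.card_add_card_le_choose hP hQ hV
    simpa using this
  | succ d ihd =>
    obtain ⟨x, hx⟩ : V.Nonempty := card_pos.1 (by omega)
    obtain ⟨P', Q', h, hP, hQ, hPs, hQs, hPc, hQc⟩ := h.exists_stable x hP hQ
    rw [← hPc, ← hQc]
    replace hPne : P'.Nonempty := by rwa [← card_pos, hPc, card_pos]
    replace hQne : Q'.Nonempty := by rwa [← card_pos, hQc, card_pos]
    clear hPc hQc
    have hVx : #(V.erase x) = 2 * (t + 1) + d := by rw [card_erase_of_mem hx]; omega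
    have hP0 := hPs.nonMemberSubfamily_nonempty hP (by omega) hPne
    have hQ0 := hQs.nonMemberSubfamily_nonempty hQ (by omega) hQne
    have hnon := ihd (h.nonMemberSubfamily x) hVx (nonMemberSubfamily_subset_powersetCard x hP)
      (nonMemberSubfamily_subset_powersetCard x hQ) hP0 hQ0
    have hP1 := memberSubfamily_subset_powersetCard x hP
    have hQ1 := memberSubfamily_subset_powersetCard x hQ
    have hone : ∀ {P Q : Finset (Finset α)}, CrossIntersecting P Q → Q ⊆ V.powersetCard (t + 1) →
        P.memberSubfamily x ⊆ (V.erase x).powersetCard t → (Q.nonMemberSubfamily x).Nonempty →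
        #(P.memberSubfamily x) + (t + 1 + d).choose t ≤ (2 * (t + 1) + d).choose t := by
      intro P Q h hQ hP1 hQ0
      obtain ⟨B, hB⟩ := hQ0
      have hB' := mem_powersetCard.1 (nonMemberSubfamily_subset_powersetCard x hQ hB)
      rw [mem_nonMemberSubfamily] at hB
      have := card_add_choose_le_of_meets hP1 hB'.1 fun A hA ↦ by
        obtain ⟨a, ha⟩ := h _ (mem_memberSubfamily.1 hA).1 B hB.1
        exact ⟨a, by grind⟩
      rw [hVx, hB'.2] at this
      convert this using 3
      omega
    have hmem : #(P'.memberSubfamily x) + #(Q'.memberSubfamily x) + (t + 1 + d).choose t ≤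
        (2 * (t + 1) + d).choose t := by
      rcases (Q'.memberSubfamily x).eq_empty_or_nonempty with hQe | hQe
      · simpa [hQe] using hone h hQ hP1 hQ0
      rcases (P'.memberSubfamily x).eq_empty_or_nonempty with hPe | hPe
      · simpa [hPe] using hone h.symm hP hQ1 hP0
      have hcr := h.memberSubfamily hP hQ (by omega) hPs
      have := ihs (d + 2) hcr (by omega) hP1 hQ1 hPe hQe
      cases t with
      | zero =>
        obtain ⟨A, hA⟩ := hPe
        obtain ⟨B, hB⟩ := hQe
        have hAB := hcr A hA B hB
        rw [card_eq_zero.1 (mem_powersetCard.1 (hP1 hA)).2] at hAB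
        simp at hAB
      | succ u =>
        have h1 : (u + 1 + (d + 2)).choose (u + 1) =
          (u + 1 + 1 + d).choose u + (u + 1 + 1 + d).choose (u + 1) := by
          rw [show u + 1 + (d + 2) = (u + 1 + 1 + d) + 1 by ring, Nat.choose_succ_succ]
        have h2 : 0 < (u + 1 + 1 + d).choose u := Nat.choose_pos (by omega)
        rw [show 2 * (u + 1) + (d + 2) = 2 * (u + 1 + 1) + d by ring] at this
        omega
    have e1 := card_memberSubfamily_add_card_nonMemberSubfamily x P'
    have e2 := card_memberSubfamily_add_card_nonMemberSubfamily x Q'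
    have e3 : (t + 1 + (d + 1)).choose (t + 1) =
      (t + 1 + d).choose t + (t + 1 + d).choose (t + 1) := Nat.choose_succ_succ _ _
    have e4 : (2 * (t + 1) + (d + 1)).choose (t + 1) =
      (2 * (t + 1) + d).choose t + (2 * (t + 1) + d).choose (t + 1) := Nat.choose_succ_succ _ _
    omega

/-- The Hilton–Milner bound for families all of whose members meet a fixed pair. -/
lemma card_add_choose_le_of_pair (s d : ℕ) {F : Finset (Finset α)} {V : Finset α}
    (hV : #V = 2 * s + 4 + d) (hF : F ⊆ V.powersetCard (s + 2)) (h : CrossIntersecting F F)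
    (hnt : ¬ ∃ y, ∀ A ∈ F, y ∈ A) {i x : α} (hi : i ∈ V) (hx : x ∈ V) (hix : i ≠ x)
    (hpair : ∀ A ∈ F, i ∈ A ∨ x ∈ A) :
    #F + (s + 1 + d).choose (s + 1) ≤ (2 * s + 3 + d).choose (s + 1) + 1 := by
  push Not at hnt
  set W := (V.erase i).erase x with hW
  have hWc : #W = 2 * (s + 1) + d := by
    rw [hW, card_erase_of_mem (by simp [hx, hix.symm]), card_erase_of_mem hi]; omega
  have hsub : ∀ {a b : α} {n : ℕ}, F ⊆ V.powersetCard (n + 1) →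
      (F.memberSubfamily a).nonMemberSubfamily b ⊆ ((V.erase a).erase b).powersetCard n :=
    fun hF ↦ nonMemberSubfamily_subset_powersetCard _ (memberSubfamily_subset_powersetCard _ hF)
  set P := (F.memberSubfamily i).nonMemberSubfamily x with hPdef
  set Q := (F.memberSubfamily x).nonMemberSubfamily i with hQdef
  set R := (F.memberSubfamily i).memberSubfamily x with hRdef
  have hP : P ⊆ W.powersetCard (s + 1) := hsub hF
  have hQ : Q ⊆ W.powersetCard (s + 1) := by
    rw [hW, erase_right_comm]; exact hsub hF
  have hR : R ⊆ W.powersetCard s := memberSubfamily_subset_powersetCard _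
    (memberSubfamily_subset_powersetCard _ hF)
  have hQc : #(F.nonMemberSubfamily i) = #Q := by
    have e := card_memberSubfamily_add_card_nonMemberSubfamily x (F.nonMemberSubfamily i)
    have e1 : (F.nonMemberSubfamily i).nonMemberSubfamily x = ∅ := by
      ext A; simp only [mem_nonMemberSubfamily, notMem_empty, iff_false]
      have := hpair A
      tauto
    have e2 : (F.nonMemberSubfamily i).memberSubfamily x = Q := by
      ext A
      simp only [hQdef, mem_nonMemberSubfamily, mem_memberSubfamily, mem_insert]
      tauto
    rw [e1, e2, card_empty] at e
    omega
  have hcr : CrossIntersecting P Q := by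
    intro A hA B hB
    simp only [hPdef, hQdef, mem_nonMemberSubfamily, mem_memberSubfamily] at hA hB
    obtain ⟨a, ha⟩ := h _ hA.1.1 _ hB.1.1
    exact ⟨a, by grind⟩
  have hPne : P.Nonempty := by
    obtain ⟨A, hA, hxA⟩ := hnt x
    have hiA := (hpair A hA).resolve_right hxA
    refine ⟨A.erase i, ?_⟩
    simp only [hPdef, mem_nonMemberSubfamily, mem_memberSubfamily, insert_erase hiA]
    grind
  have hQne : Q.Nonempty := by
    obtain ⟨A, hA, hiA⟩ := hnt i
    have hxA := (hpair A hA).resolve_left hiA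
    refine ⟨A.erase x, ?_⟩
    simp only [hQdef, mem_nonMemberSubfamily, mem_memberSubfamily, insert_erase hxA]
    grind
  have hPQ := hcr.card_add_card_add_choose_le (s + 1) d hWc hP hQ hPne hQne
  have hRc := card_le_card hR
  rw [card_powersetCard, hWc] at hRc
  have e1 := card_memberSubfamily_add_card_nonMemberSubfamily i F
  have e2 := card_memberSubfamily_add_card_nonMemberSubfamily x (F.memberSubfamily i)
  rw [← hPdef, ← hRdef] at e2
  have e3 : (2 * s + 3 + d).choose (s + 1) =
      (2 * (s + 1) + d).choose s + (2 * (s + 1) + d).choose (s + 1) := by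
    rw [show 2 * s + 3 + d = (2 * (s + 1) + d) + 1 by ring, Nat.choose_succ_succ]
  omega

/-- A non-trivial intersecting family either becomes stable under compressions that keep it
non-trivial, or is turned into one all of whose members meet a fixed pair. -/
lemma CrossIntersecting.exists_stable_or_pair {F : Finset (Finset α)} {V : Finset α} {s : ℕ}
    {x : α} (h : CrossIntersecting F F) (hF : F ⊆ V.powersetCard s)
    (hnt : ¬ ∃ y, ∀ A ∈ F, y ∈ A) :
    ∃ G : Finset (Finset α), CrossIntersecting G G ∧ G ⊆ V.powersetCard s ∧
      (¬ ∃ y, ∀ A ∈ G, y ∈ A) ∧ #G = #F ∧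
      (IsStable x V G ∨ ∃ i ∈ V, i ≠ x ∧ ∀ A ∈ G, i ∈ A ∨ x ∈ A) := by
  by_cases hst : IsStable x V F
  · exact ⟨F, h, hF, hnt, rfl, Or.inl hst⟩
  unfold IsStable at hst
  push Not at hst
  obtain ⟨i, hi, hix, A, hA, hxA, hiA, hn⟩ := hst
  by_cases htr : ∃ y, ∀ A ∈ 𝓒 {i} {x} F, y ∈ A
  · refine ⟨F, h, hF, hnt, rfl, Or.inr ⟨i, hi, hix, ?_⟩⟩
    obtain ⟨y, hy⟩ := htr
    have key : ∀ B ∈ F, y ∈ B ∨ (y = i ∧ x ∈ B) := by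
      intro B hB
      have := hy _ (UV.compress_mem_compression hB)
      by_cases hc : i ∉ B ∧ x ∈ B
      · rw [compress_singleton_of_mem hc.1 hc.2] at this
        grind
      · rw [compress_singleton_of_not hc] at this
        exact Or.inl this
    have hyi : y = i := by
      by_contra hne
      exact hnt ⟨y, fun B hB ↦ (key B hB).resolve_right fun h ↦ hne h.1⟩
    subst hyi
    exact fun B hB ↦ (key B hB).imp_right And.right
  · have hlt := card_filter_compression_lt hix hA hxA hiA hn
    obtain ⟨G, h1, h2, h3, h4, h5⟩ := (h.compression hix).exists_stable_or_pair
      (compression_subset_powersetCard hF hi) htr (x := x)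
    exact ⟨G, h1, h2, h3, h4.trans (UV.card_compression _ _ _), h5⟩
termination_by #{A ∈ F | x ∈ A}

/-- The Hilton–Milner bound over an arbitrary ground set. -/
lemma card_add_choose_le (s d : ℕ) {F : Finset (Finset α)} {V : Finset α}
    (hV : #V = 2 * s + 4 + d) (hF : F ⊆ V.powersetCard (s + 2)) (h : CrossIntersecting F F)
    (hnt : ¬ ∃ y, ∀ A ∈ F, y ∈ A) :
    #F + (s + 1 + d).choose (s + 1) ≤ (2 * s + 3 + d).choose (s + 1) + 1 := by
  induction s using Nat.strong_induction_on generalizing d F V with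
  | _ s ihs =>
  induction d generalizing F V with
  | zero =>
    have h1 := h.card_add_card_le_choose hF hF (by omega)
    have h2 : (2 * (s + 2)).choose (s + 2) =
        (2 * s + 3).choose (s + 1) + (2 * s + 3).choose (s + 2) := Nat.choose_succ_succ _ _
    have h3 : (2 * s + 3).choose (s + 2) = (2 * s + 3).choose (s + 1) :=
      Nat.choose_symm_half (s + 1)
    simp only [add_zero, Nat.choose_self]
    omega
  | succ d ihd =>
    obtain ⟨x, hx⟩ : V.Nonempty := card_pos.1 (by omega)
    obtain ⟨G, h, hG, hnt, hc, hst | ⟨i, hi, hix, hpair⟩⟩ :=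
      h.exists_stable_or_pair (x := x) hF hnt
    swap
    · rw [← hc]
      exact card_add_choose_le_of_pair s (d + 1) hV hG h hnt hi hx hix hpair
    rw [← hc]
    have hVx : #(V.erase x) = 2 * s + 4 + d := by rw [card_erase_of_mem hx]; omega
    have hnt0 : ∀ y, ∃ B ∈ G.nonMemberSubfamily x, y ∉ B := by
      push Not at hnt
      intro y
      obtain ⟨A, hA, hy⟩ := hnt y
      exact hst.exists_nonMember hG (by omega) hA hy
    have hnon := ihd hVx (nonMemberSubfamily_subset_powersetCard x hG) (h.nonMemberSubfamily x)
      (by push Not; exact hnt0)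
    have hG1 := memberSubfamily_subset_powersetCard x hG
    have hcr := h.memberSubfamily hG hG (by omega) hst
    have hmem : #(G.memberSubfamily x) + (s + 1 + d).choose s ≤ (2 * s + 3 + d).choose s := by
      rcases (G.memberSubfamily x).eq_empty_or_nonempty with he | ⟨A, hA⟩
      · rw [he, card_empty, zero_add]
        exact Nat.choose_le_choose _ (by omega)
      have hA' := mem_powersetCard.1 (hG1 hA)
      by_cases htr : ∃ y, ∀ A ∈ G.memberSubfamily x, y ∈ A
      · obtain ⟨y, hy⟩ := htr
        have hyV := hA'.1 (hy A hA)
        obtain ⟨B, hB, hyB⟩ := hnt0 y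
        have hB' := mem_powersetCard.1 (nonMemberSubfamily_subset_powersetCard x hG hB)
        have hz : (G.memberSubfamily x).nonMemberSubfamily y = ∅ := by
          ext C
          simp only [mem_nonMemberSubfamily, notMem_empty, iff_false]
          exact fun hC ↦ hC.2 (hy C hC.1)
        have e := card_memberSubfamily_add_card_nonMemberSubfamily y (G.memberSubfamily x)
        rw [hz, card_empty, add_zero] at e
        have := card_add_choose_le_of_meets (memberSubfamily_subset_powersetCard y hG1)
          (T := B) (subset_erase.2 ⟨hB'.1, hyB⟩) fun C hC ↦ by
            simp only [mem_memberSubfamily] at hC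
            obtain ⟨a, ha⟩ := h _ hC.1.1 B (mem_nonMemberSubfamily.1 hB).1
            rw [mem_nonMemberSubfamily] at hB
            exact ⟨a, by grind⟩
        rw [e, card_erase_of_mem hyV, hVx, hB'.2] at this
        convert this using 3 <;> omega
      · cases s with
        | zero =>
          obtain ⟨y, hy⟩ := card_eq_one.1 hA'.2
          refine absurd ⟨y, fun B hB ↦ ?_⟩ htr
          obtain ⟨a, ha⟩ := hcr A hA B hB
          grind
        | succ t =>
          have := ihs t (by omega) (d + 2) (by omega) hG1 hcr htr
          have h1 : (t + 1 + (d + 2)).choose (t + 1) =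
              (t + 1 + 1 + d).choose t + (t + 1 + 1 + d).choose (t + 1) := by
            rw [show t + 1 + (d + 2) = (t + 1 + 1 + d) + 1 by ring, Nat.choose_succ_succ]
          have h2 : 0 < (t + 1 + 1 + d).choose t := Nat.choose_pos (by omega)
          rw [show 2 * t + 3 + (d + 2) = 2 * (t + 1) + 3 + d by ring] at this
          omega
    have e1 := card_memberSubfamily_add_card_nonMemberSubfamily x G
    have e3 : (s + 1 + (d + 1)).choose (s + 1) =
      (s + 1 + d).choose s + (s + 1 + d).choose (s + 1) := Nat.choose_succ_succ _ _
    have e4 : (2 * s + 3 + (d + 1)).choose (s + 1) =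
      (2 * s + 3 + d).choose s + (2 * s + 3 + d).choose (s + 1) := Nat.choose_succ_succ _ _
    omega

end HiltonMilner

/-- Hilton–Milner Theorem. -/
theorem hilton_milner (n k : ℕ) (hk : 2 ≤ k) (hnk : 2 * k ≤ n)
    (ℱ : Finset (Finset ℕ)) (hℱ : ℱ ⊆ (Finset.Icc 1 n).powersetCard k)
    (hint : ∀ F ∈ ℱ, ∀ F' ∈ ℱ, (F ∩ F').Nonempty)
    (hnontriv : ¬ ∃ x, ∀ F ∈ ℱ, x ∈ F) :
    ℱ.card ≤ Nat.choose (n - 1) (k - 1) - Nat.choose (n - k - 1) (k - 1) + 1 := by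
  obtain ⟨s, rfl⟩ := Nat.exists_eq_add_of_le' hk
  obtain ⟨d, rfl⟩ := Nat.exists_eq_add_of_le hnk
  have := HiltonMilner.card_add_choose_le s d (V := Finset.Icc 1 (2 * (s + 2) + d))
    (by rw [Nat.card_Icc]; omega) hℱ hint hnontriv
  rw [show 2 * (s + 2) + d - 1 = 2 * s + 3 + d by omega,
    show 2 * (s + 2) + d - (s + 2) - 1 = s + 1 + d by omega, show s + 2 - 1 = s + 1 by omega]
  have hle : (s + 1 + d).choose (s + 1) ≤ (2 * s + 3 + d).choose (s + 1) :=
    Nat.choose_le_choose _ (by omega)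
  omega
end
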